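/- arXiv:2309.05155 — 2 statements merged into one kernel-verified Lean document; each statement's English description precedes it below -/
import Mathlib

section
/- Let (Φ_t)_{t∈ℕ} be a countable family, where each Φ_t assigns to every n ∈ ℕ a quantum channel Φ_{t,n} from n qubits to 2n qubits. Then there exist bit strings x_n, θ_n ∈ {0,1}^n for every n ∈ ℕ such that for every t ∈ ℕ, the function n ↦ (⟨x_n^{θ_n}| ⊗ ⟨x_n^{θ_n}|) Φ_{t,n}(|x_n^{θ_n}⟩⟨x_n^{θ_n}|) (|x_n^{θ_n}⟩ ⊗ |x_n^{θ_n}⟩) is negligible. In words: there is a single fixed sequence of Wiesner states that every member of the countable family of cloning channels fails to clone with more than negligible fidelity. -/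
open scoped Matrix

/-- A function `f : ℕ → ℝ` is negligible if for every `c`, `f n ≤ n⁻ᶜ` for all
sufficiently large `n`. -/
def Negligible (f : ℕ → ℝ) : Prop :=
  ∀ c : ℕ, ∃ N : ℕ, ∀ n ≥ N, f n ≤ 1 / (n : ℝ) ^ c

/-- The amplitude of the single-qubit state `H^θᵢ |xᵢ⟩` at the basis state `|sᵢ⟩`. -/
noncomputable def qAmp (xi θi si : Bool) : ℂ :=
  if θi then ((1 / Real.sqrt 2 : ℝ) : ℂ) * (if xi && si then -1 else 1)
  else if si = xi then 1 else 0

/-- The Wiesner state `|x^θ⟩ = H^{θ₁}|x₁⟩ ⊗ ⋯ ⊗ H^{θₙ}|xₙ⟩` as a vector indexed by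
computational basis strings. -/
noncomputable def wiesnerVec {n : ℕ} (x θ : Fin n → Bool) : (Fin n → Bool) → ℂ :=
  fun s => ∏ i : Fin n, qAmp (x i) (θ i) (s i)

/-- The density matrix `|x^θ⟩⟨x^θ|` of a Wiesner state. -/
noncomputable def wiesnerDM {n : ℕ} (x θ : Fin n → Bool) :
    Matrix (Fin n → Bool) (Fin n → Bool) ℂ :=
  fun s s' => wiesnerVec x θ s * star (wiesnerVec x θ s')

/-- The two-fold tensor `v ⊗ v` of a vector on `n` qubits, as a vector on `2n` qubits. -/
noncomputable def pairVec {n : ℕ} (v : (Fin n → Bool) → ℂ) : (Fin (2 * n) → Bool) → ℂ :=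
  fun s => v (fun i => s ⟨i.val, by have := i.isLt; omega⟩) *
    v (fun i => s ⟨n + i.val, by have := i.isLt; omega⟩)

/-- The fidelity `⟨x^θ| ⊗ ⟨x^θ| Φ(|x^θ⟩⟨x^θ|) |x^θ⟩ ⊗ |x^θ⟩` of the output of the
channel with Kraus operators `K` on input `|x^θ⟩⟨x^θ|` with two perfect copies. -/
noncomputable def cloneFid {n m : ℕ}
    (K : Fin m → Matrix (Fin (2 * n) → Bool) (Fin n → Bool) ℂ)
    (x θ : Fin n → Bool) : ℝ :=
  (∑ s : Fin (2 * n) → Bool, ∑ s' : Fin (2 * n) → Bool,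
    star (pairVec (wiesnerVec x θ) s) *
      (∑ i, K i * wiesnerDM x θ * (K i)ᴴ) s s' *
      pairVec (wiesnerVec x θ) s').re

/-!
Write `ψ_a` for the Wiesner states, `a` ranging over the `4 ^ n` pairs `(x, θ)`. The amplitude
`⟨ψ_a ⊗ ψ_a| M |ψ_a⟩` is the pairing of `M` with the operator `|ψ_a ⊗ ψ_a⟩⟨ψ_a|`, so the sum over
`a` of its squared modulus is at most `‖G‖ ‖M‖²`, where `‖M‖` is the Hilbert–Schmidt norm and `G` is
the Gram matrix of these operators. `G` is the `n`-th tensor power of a `4 × 4` matrix `1 + U / 2`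
with `U` unitary, whence `‖G‖ ≤ (3 / 2) ^ n`. The squared Hilbert–Schmidt norms of the Kraus
operators of a channel add up to `2 ^ n`, so its average fidelity is at most
`(3 / 2) ^ n * 2 ^ n / 4 ^ n = (3 / 4) ^ n`.

At length `n`, averaging over the states then yields one for which each of the first `n + 1`
channels has fidelity at most `n + 1` times its average; every fixed channel is among them for
large `n`.
-/

open Filter Finset
open scoped BigOperators Kronecker ComplexOrder MatrixOrder Matrix.Norms.L2Operator

section Negligible

variable {f g : ℕ → ℝ}

theorem negligible_iff_eventually_le :
    Negligible f ↔ ∀ c : ℕ, ∀ᶠ n : ℕ in atTop, f n ≤ 1 / (n : ℝ) ^ c := by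
  simp only [Negligible, eventually_atTop]

theorem Negligible.of_eventually_le (hg : Negligible g) (hfg : ∀ᶠ n in atTop, f n ≤ g n) :
    Negligible f := by
  rw [negligible_iff_eventually_le] at hg ⊢
  exact fun c => (hfg.and (hg c)).mono fun _ h => h.1.trans h.2

theorem Negligible.succ_mul (hf : Negligible f) : Negligible fun n => (n + 1) * f n := by
  rw [negligible_iff_eventually_le] at hf ⊢
  intro c
  filter_upwards [hf (c + 2), eventually_ge_atTop 2] with n hn two_le
  have two_le' : (2 : ℝ) ≤ n := by exact_mod_cast two_le
  calc (n + 1) * f n ≤ (n : ℝ) ^ 2 * (1 / (n : ℝ) ^ (c + 2)) := by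
        refine (mul_le_mul_of_nonneg_left hn (by positivity)).trans ?_
        gcongr
        nlinarith
    _ = 1 / (n : ℝ) ^ c := by
        rw [pow_add, mul_comm (_ ^ c)]
        field_simp

theorem negligible_pow {r : ℝ} (hr : |r| < 1) : Negligible (r ^ ·) := by
  rw [negligible_iff_eventually_le]
  intro c
  filter_upwards [(tendsto_pow_const_mul_const_pow_of_abs_lt_one c hr).eventually_le_const
    zero_lt_one, eventually_gt_atTop 0] with n hn n_pos
  rw [le_div_iff₀' (by positivity)]
  exact hn

end Negligible

section Derandomization

theorem exists_forall_mem_le_card_mul_expect {κ α R : Type*} [Fintype α] [Nonempty α]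
    [Field R] [LinearOrder R] [IsStrictOrderedRing R] (s : Finset κ) {f : κ → α → R}
    (hf : ∀ t ∈ s, 0 ≤ f t) : ∃ a, ∀ t ∈ s, f t a ≤ #s * 𝔼 b, f t b := by
  -- Apply the first-moment bound to the sum of the `f t`, each normalised to mean at most one.
  -- A vanishing mean is harmless: then `f t = 0`, and division by zero gives zero.
  have mean_le : 𝔼 a, ∑ t ∈ s, f t a / 𝔼 b, f t b ≤ #s := by
    rw [expect_sum_comm, ← nsmul_one]
    refine sum_le_card_nsmul _ _ _ fun t _ => ?_
    rw [← expect_div]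
    exact div_self_le_one _
  obtain ⟨a, -, ha⟩ := exists_le_of_expect_le univ_nonempty mean_le
  refine ⟨a, fun t ht => ?_⟩
  obtain mean_zero | mean_pos := (expect_nonneg fun b _ => hf t ht b).eq_or_lt
  · have f_zero : f t = 0 := (Fintype.expect_eq_zero_iff_of_nonneg (hf t ht)).1 mean_zero.symm
    simp [f_zero]
  · rw [← div_le_iff₀ mean_pos]
    exact (single_le_sum (f := fun t => f t a / 𝔼 b, f t b)
      (fun t ht => div_nonneg (hf t ht a) (expect_nonneg fun b _ => hf t ht b)) ht).trans ha

theorem exists_forall_negligible_of_negligible_expect {ι : Type*} [Countable ι] {α : ℕ → Type*}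
    [∀ n, Fintype (α n)] [∀ n, Nonempty (α n)] {f : ι → ∀ n, α n → ℝ}
    (f_nonneg : ∀ t n, 0 ≤ f t n) (hf : ∀ t, Negligible fun n => 𝔼 a, f t n a) :
    ∃ a : ∀ n, α n, ∀ t, Negligible fun n => f t n (a n) := by
  classical
  obtain h | h := isEmpty_or_nonempty ι
  · exact ⟨fun n => Classical.arbitrary _, isEmptyElim⟩
  obtain ⟨e, he⟩ := exists_surjective_nat ι
  -- At length `n` only the first `n + 1` members of the family have to be defeated.
  choose a ha using fun n => exists_forall_mem_le_card_mul_expect ((range (n + 1)).image e)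
    fun t _ => f_nonneg t n
  refine ⟨a, he.forall.2 fun k => (hf (e k)).succ_mul.of_eventually_le ?_⟩
  filter_upwards [eventually_ge_atTop k] with n k_le
  have card_le : (#((range (n + 1)).image e) : ℝ) ≤ n + 1 := by
    exact_mod_cast card_image_le.trans_eq (card_range _)
  exact (ha n _ (mem_image_of_mem e (mem_range_succ_iff.2 k_le))).trans
    (mul_le_mul_of_nonneg_right card_le (expect_nonneg fun b _ => f_nonneg _ _ b))

end Derandomization

section OperatorNorm

variable {𝕜 l m n p : Type*} [RCLike 𝕜] [Fintype l] [Fintype m] [Fintype n] [Fintype p]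
  [DecidableEq m] [DecidableEq p]

theorem sum_norm_sq_mulVec_le (A : Matrix l m 𝕜) (v : m → 𝕜) :
    ∑ i, ‖(A *ᵥ v) i‖ ^ 2 ≤ ‖A‖ ^ 2 * ∑ j, ‖v j‖ ^ 2 := by
  have h := pow_le_pow_left₀ (norm_nonneg _) (A.l2_opNorm_mulVec (WithLp.toLp 2 v)) 2
  rw [mul_pow, EuclideanSpace.norm_sq_eq, EuclideanSpace.norm_sq_eq] at h
  exact h

theorem l2_opNorm_le_of_sum_norm_sq_mulVec_le {A : Matrix l m 𝕜} {C : ℝ} (hC : 0 ≤ C)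
    (hA : ∀ v : m → 𝕜, ∑ i, ‖(A *ᵥ v) i‖ ^ 2 ≤ C ^ 2 * ∑ j, ‖v j‖ ^ 2) : ‖A‖ ≤ C := by
  rw [Matrix.l2_opNorm_def]
  refine ContinuousLinearMap.opNorm_le_bound _ hC fun v => ?_
  rw [← sq_le_sq₀ (norm_nonneg _) (by positivity), mul_pow, EuclideanSpace.norm_sq_eq,
    EuclideanSpace.norm_sq_eq]
  exact hA v

theorem l2_opNorm_submatrix_equiv_le (A : Matrix l m 𝕜) (e : n ≃ l) (f : p ≃ m) :
    ‖A.submatrix e f‖ ≤ ‖A‖ := by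
  refine l2_opNorm_le_of_sum_norm_sq_mulVec_le (norm_nonneg _) fun v => ?_
  rw [Matrix.submatrix_mulVec_equiv, ← f.symm.sum_comp]
  exact (e.sum_comp fun i => ‖(A *ᵥ (v ∘ f.symm)) i‖ ^ 2).trans_le (sum_norm_sq_mulVec_le A _)

theorem l2_opNorm_kronecker_le (A : Matrix l m 𝕜) (B : Matrix n p 𝕜) :
    ‖A ⊗ₖ B‖ ≤ ‖A‖ * ‖B‖ := by
  refine l2_opNorm_le_of_sum_norm_sq_mulVec_le (by positivity) fun v => ?_
  have kronecker_mulVec (i : l) (j : n) : ((A ⊗ₖ B) *ᵥ v) (i, j) =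
      (A *ᵥ fun i' => (B *ᵥ fun j' => v (i', j')) j) i := by
    simp only [Matrix.mulVec, dotProduct, Matrix.kronecker_apply, Fintype.sum_prod_type, mul_sum,
      mul_assoc]
  calc ∑ q, ‖((A ⊗ₖ B) *ᵥ v) q‖ ^ 2
      = ∑ j, ∑ i, ‖(A *ᵥ fun i' => (B *ᵥ fun j' => v (i', j')) j) i‖ ^ 2 := by
        simp only [Fintype.sum_prod_type_right, kronecker_mulVec]
    _ ≤ ∑ j, ‖A‖ ^ 2 * ∑ i', ‖(B *ᵥ fun j' => v (i', j')) j‖ ^ 2 :=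
        sum_le_sum fun j _ => sum_norm_sq_mulVec_le A _
    _ = ‖A‖ ^ 2 * ∑ i', ∑ j, ‖(B *ᵥ fun j' => v (i', j')) j‖ ^ 2 := by
        rw [← mul_sum, sum_comm]
    _ ≤ ‖A‖ ^ 2 * ∑ i', ‖B‖ ^ 2 * ∑ j', ‖v (i', j')‖ ^ 2 := by
        gcongr
        exact sum_norm_sq_mulVec_le B _
    _ = (‖A‖ * ‖B‖) ^ 2 * ∑ q, ‖v q‖ ^ 2 := by
        rw [← mul_sum, Fintype.sum_prod_type, mul_pow, mul_assoc]

end OperatorNorm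

section PiKronecker

variable {α β 𝕜 : Type*}

/-- The Kronecker product `⨂ᵢ Aᵢ` of a finite family of matrices, with rows and columns indexed by
functions instead of iterated pairs. -/
def piKronecker {ι R : Type*} [Fintype ι] [CommMonoid R] (A : ι → Matrix α β R) :
    Matrix (ι → α) (ι → β) R :=
  Matrix.of fun a b => ∏ i, A i (a i) (b i)

theorem piKronecker_succ {R : Type*} [CommSemiring R] {n : ℕ} (A : Fin (n + 1) → Matrix α β R) :
    piKronecker A = (A 0 ⊗ₖ piKronecker fun i => A i.succ).submatrix
      (Fin.consEquiv fun _ => α).symm (Fin.consEquiv fun _ => β).symm := by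
  ext a b
  simp [piKronecker, Fin.prod_univ_succ, Fin.consEquiv, Fin.tail]

theorem l2_opNorm_piKronecker_le [RCLike 𝕜] [Fintype α] [Fintype β] [DecidableEq β]
    {n : ℕ} (A : Fin n → Matrix α β 𝕜) : ‖piKronecker A‖ ≤ ∏ i, ‖A i‖ := by
  induction n with
  | zero =>
    refine l2_opNorm_le_of_sum_norm_sq_mulVec_le (by simp) fun v => ?_
    simp [piKronecker, Matrix.mulVec, dotProduct]
  | succ n ih =>
    rw [piKronecker_succ, Fin.prod_univ_succ]
    exact (l2_opNorm_submatrix_equiv_le _ _ _).trans <| (l2_opNorm_kronecker_le _ _).trans <|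
      mul_le_mul_of_nonneg_left (ih _) (norm_nonneg _)

end PiKronecker

section Amplitudes

variable {𝕜 α m n : Type*} [RCLike 𝕜] [Fintype α] [Fintype m] [Fintype n]

/-- The Gram matrix of the operators `|φ a⟩⟨ψ a|`, whose Hilbert–Schmidt pairing with `M` is the
amplitude `⟨φ a| M |ψ a⟩`. -/
def amplitudeGram (φ : α → m → 𝕜) (ψ : α → n → 𝕜) : Matrix α α 𝕜 :=
  Matrix.of fun a b => (star (φ a) ⬝ᵥ φ b) * (star (ψ b) ⬝ᵥ ψ a)

theorem sum_norm_sq_amplitude_le [DecidableEq α] (φ : α → m → 𝕜) (ψ : α → n → 𝕜)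
    (M : Matrix m n 𝕜) :
    ∑ a, ‖star (φ a) ⬝ᵥ M *ᵥ ψ a‖ ^ 2 ≤ ‖amplitudeGram φ ψ‖ * ∑ s, ∑ u, ‖M s u‖ ^ 2 := by
  classical
  let V : Matrix α (m × n) 𝕜 := Matrix.of fun a q => star (φ a q.1) * ψ a q.2
  have V_mulVec (a : α) : (V *ᵥ fun q => M q.1 q.2) a = star (φ a) ⬝ᵥ M *ᵥ ψ a := by
    simp only [V, Matrix.mulVec, dotProduct, Matrix.of_apply, Pi.star_apply,
      Fintype.sum_prod_type, mul_sum]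
    exact sum_congr rfl fun s _ => sum_congr rfl fun u _ => by ring
  have V_mul_conjTranspose : V * Vᴴ = amplitudeGram φ ψ := by
    ext a b
    simp only [V, amplitudeGram, Matrix.mul_apply, Matrix.conjTranspose_apply, dotProduct,
      Matrix.of_apply, Pi.star_apply, Fintype.sum_prod_type, sum_mul_sum, star_mul', star_star]
    exact sum_congr rfl fun s _ => sum_congr rfl fun u _ => by ring
  have norm_V_sq : ‖V‖ ^ 2 = ‖amplitudeGram φ ψ‖ := by
    rw [← V_mul_conjTranspose, ← Matrix.l2_opNorm_conjTranspose V, sq,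
      ← Matrix.l2_opNorm_conjTranspose_mul_self, Matrix.conjTranspose_conjTranspose]
  simpa only [V_mulVec, norm_V_sq, Fintype.sum_prod_type] using
    sum_norm_sq_mulVec_le V fun q => M q.1 q.2

theorem star_dotProduct_kraus_mulVec {ι : Type*} [Fintype ι] (K : ι → Matrix m n 𝕜) (φ : m → 𝕜)
    (ψ : n → 𝕜) :
    star φ ⬝ᵥ (∑ i, K i * Matrix.vecMulVec ψ (star ψ) * (K i)ᴴ) *ᵥ φ =
      ((∑ i, ‖star φ ⬝ᵥ K i *ᵥ ψ‖ ^ 2 : ℝ) : 𝕜) := by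
  rw [Matrix.sum_mulVec, dotProduct_sum]
  push_cast
  refine sum_congr rfl fun i _ => ?_
  rw [Matrix.mul_vecMulVec, Matrix.vecMulVec_mul, ← Matrix.star_mulVec, Matrix.vecMulVec_mulVec,
    op_smul_eq_smul, dotProduct_smul, smul_eq_mul, Matrix.star_dotProduct (K i *ᵥ ψ),
    ← starRingEnd_apply (_ ⬝ᵥ _), RCLike.conj_mul]

theorem sum_norm_sq_eq_re_trace_conjTranspose_mul_self (M : Matrix m n 𝕜) :
    ∑ s, ∑ u, ‖M s u‖ ^ 2 = RCLike.re (Mᴴ * M).trace := by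
  rw [sum_comm]
  simp [Matrix.trace, Matrix.mul_apply, ← RCLike.normSq_eq_def', RCLike.normSq_apply]

theorem sum_sum_norm_sq_le_card_of_kraus_le_one [DecidableEq n] {ι : Type*} [Fintype ι]
    {K : ι → Matrix m n 𝕜} (hK : ∑ i, (K i)ᴴ * K i ≤ 1) :
    ∑ i, ∑ s, ∑ u, ‖K i s u‖ ^ 2 ≤ Fintype.card n := by
  have h := (RCLike.nonneg_iff.1 (Matrix.le_iff.1 hK).trace_nonneg).1
  rw [Matrix.trace_sub, Matrix.trace_one, Matrix.trace_sum, map_sub, map_sum,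
    RCLike.natCast_re, sub_nonneg] at h
  simpa only [sum_norm_sq_eq_re_trace_conjTranspose_mul_self] using h

end Amplitudes

section Qubit

/-- The matrix of overlaps `⟨ψ_a|ψ_b⟩` of the four states `H^θ|x⟩`, `a = (x, θ)`. -/
noncomputable def qubitGram : Matrix (Bool × Bool) (Bool × Bool) ℂ :=
  Matrix.of fun a b => star (qAmp a.1 a.2) ⬝ᵥ qAmp b.1 b.2

/-- The part of `qubitGram` between the two bases: `H` on the bit `x` together with a flip of the
basis `θ`. -/
noncomputable def crossBasisHadamard : Matrix (Bool × Bool) (Bool × Bool) ℂ :=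
  Matrix.of fun a b => if a.2 = b.2 then 0 else qAmp a.1 true b.1

theorem inv_sqrt_two_mul_self : ((√2 : ℝ) : ℂ)⁻¹ * ((√2 : ℝ) : ℂ)⁻¹ = 2⁻¹ := by
  rw [← mul_inv, ← Complex.ofReal_mul, Real.mul_self_sqrt zero_le_two, Complex.ofReal_ofNat]

theorem qubitGram_eq : qubitGram = 1 + crossBasisHadamard := by
  ext ⟨x, θ⟩ ⟨y, φ⟩
  cases x <;> cases θ <;> cases y <;> cases φ <;>
    simp [qubitGram, crossBasisHadamard, qAmp, dotProduct, inv_sqrt_two_mul_self] <;> norm_num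

theorem isSelfAdjoint_crossBasisHadamard : IsSelfAdjoint crossBasisHadamard := by
  ext ⟨x, θ⟩ ⟨y, φ⟩
  cases x <;> cases θ <;> cases y <;> cases φ <;>
    simp [crossBasisHadamard, qAmp]

theorem crossBasisHadamard_mul_self : crossBasisHadamard * crossBasisHadamard = 1 := by
  ext ⟨x, θ⟩ ⟨y, φ⟩
  cases x <;> cases θ <;> cases y <;> cases φ <;>
    simp [crossBasisHadamard, qAmp, Matrix.mul_apply, Fintype.sum_prod_type,
      inv_sqrt_two_mul_self] <;> norm_num

theorem norm_crossBasisHadamard : ‖crossBasisHadamard‖ = 1 := by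
  refine CStarRing.norm_of_mem_unitary (Unitary.mem_iff.2 ?_)
  rw [isSelfAdjoint_crossBasisHadamard.star_eq, and_self, crossBasisHadamard_mul_self]

/-- The Gram matrix of the operators `|ψ_a ⊗ ψ_a⟩⟨ψ_a|` for the four states `ψ_a = H^θ|x⟩`, whose
pairings with a Kraus operator are its cloning amplitudes. -/
noncomputable def qubitCloneGram : Matrix (Bool × Bool) (Bool × Bool) ℂ :=
  Matrix.of fun a b => qubitGram a b ^ 2 * qubitGram b a

-- Overlaps within a basis are 0 or 1; those between the bases are ±1/√2, which cubing halves.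
theorem qubitCloneGram_eq : qubitCloneGram = 1 + (2⁻¹ : ℂ) • crossBasisHadamard := by
  rw [qubitCloneGram, qubitGram_eq]
  ext ⟨x, θ⟩ ⟨y, φ⟩
  cases x <;> cases θ <;> cases y <;> cases φ <;>
    simp [crossBasisHadamard, qAmp, sq, inv_sqrt_two_mul_self]

theorem norm_qubitCloneGram_le : ‖qubitCloneGram‖ ≤ 3 / 2 := by
  rw [qubitCloneGram_eq]
  refine (norm_add_le _ _).trans ?_
  rw [norm_smul, norm_crossBasisHadamard, CStarRing.norm_one]
  norm_num

end Qubit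

section Wiesner

variable {m n : ℕ}

/-- The Wiesner state whose `i`-th qubit is `H^θ|x⟩` with `(x, θ) = a i`. -/
noncomputable def wiesnerState (a : Fin n → Bool × Bool) : (Fin n → Bool) → ℂ :=
  wiesnerVec (fun i => (a i).1) fun i => (a i).2

theorem star_wiesnerState_dotProduct (a b : Fin n → Bool × Bool) :
    star (wiesnerState a) ⬝ᵥ wiesnerState b = ∏ i, qubitGram (a i) (b i) := by
  simp only [wiesnerState, wiesnerVec, dotProduct, Pi.star_apply, star_prod, ← prod_mul_distrib,
    qubitGram, Matrix.of_apply, prod_univ_sum, Fintype.piFinset_univ]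

/-- The two registers of a `2n`-bit string, split as in `pairVec`. -/
def registersEquiv (n : ℕ) : (Fin (2 * n) → Bool) ≃ (Fin n → Bool) × (Fin n → Bool) :=
  ((finCongr (two_mul n)).arrowCongr (Equiv.refl Bool)).trans (Fin.appendEquiv n n).symm

theorem pairVec_apply (v : (Fin n → Bool) → ℂ) (s : Fin (2 * n) → Bool) :
    pairVec v s = v (registersEquiv n s).1 * v (registersEquiv n s).2 :=
  rfl

theorem star_pairVec_dotProduct (v w : (Fin n → Bool) → ℂ) :
    star (pairVec v) ⬝ᵥ pairVec w = (star v ⬝ᵥ w) ^ 2 := by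
  calc star (pairVec v) ⬝ᵥ pairVec w
      = ∑ q : (Fin n → Bool) × (Fin n → Bool), star (v q.1 * v q.2) * (w q.1 * w q.2) := by
        simp only [dotProduct, Pi.star_apply, pairVec_apply]
        exact (registersEquiv n).sum_comp fun q => star (v q.1 * v q.2) * (w q.1 * w q.2)
    _ = (star v ⬝ᵥ w) ^ 2 := by
        rw [Fintype.sum_prod_type, sq, dotProduct, sum_mul_sum]
        simp only [star_mul', Pi.star_apply, mul_mul_mul_comm]

theorem amplitudeGram_pairVec_wiesnerState :
    amplitudeGram (fun a : Fin n → Bool × Bool => pairVec (wiesnerState a)) wiesnerState =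
      piKronecker fun _ => qubitCloneGram := by
  ext a b
  simp only [amplitudeGram, piKronecker, qubitCloneGram, Matrix.of_apply,
    star_pairVec_dotProduct, star_wiesnerState_dotProduct, prod_mul_distrib, prod_pow]

theorem cloneFid_eq_sum_norm_sq (K : Fin m → Matrix (Fin (2 * n) → Bool) (Fin n → Bool) ℂ)
    (x θ : Fin n → Bool) :
    cloneFid K x θ =
      ∑ i, ‖star (pairVec (wiesnerVec x θ)) ⬝ᵥ K i *ᵥ wiesnerVec x θ‖ ^ 2 := by
  have cloneFid_eq_re : cloneFid K x θ = (star (pairVec (wiesnerVec x θ)) ⬝ᵥ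
      (∑ i, K i * Matrix.vecMulVec (wiesnerVec x θ) (star (wiesnerVec x θ)) * (K i)ᴴ) *ᵥ
        pairVec (wiesnerVec x θ)).re := by
    simp only [cloneFid, dotProduct, Matrix.mulVec, mul_sum, mul_assoc]
    rfl
  rw [cloneFid_eq_re, star_dotProduct_kraus_mulVec]
  exact Complex.ofReal_re _

theorem cloneFid_nonneg (K : Fin m → Matrix (Fin (2 * n) → Bool) (Fin n → Bool) ℂ)
    (x θ : Fin n → Bool) : 0 ≤ cloneFid K x θ := by
  rw [cloneFid_eq_sum_norm_sq]
  positivity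

theorem sum_cloneFid_le (K : Fin m → Matrix (Fin (2 * n) → Bool) (Fin n → Bool) ℂ) :
    ∑ a : Fin n → Bool × Bool, cloneFid K (fun i => (a i).1) (fun i => (a i).2) ≤
      (3 / 2) ^ n * ∑ i, ∑ s, ∑ u, ‖K i s u‖ ^ 2 := by
  have norm_gram_le : ‖amplitudeGram (fun a : Fin n → Bool × Bool => pairVec (wiesnerState a))
      wiesnerState‖ ≤ (3 / 2) ^ n := by
    rw [amplitudeGram_pairVec_wiesnerState]
    refine (l2_opNorm_piKronecker_le _).trans ?_
    rw [prod_const, card_univ, Fintype.card_fin]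
    exact pow_le_pow_left₀ (norm_nonneg _) norm_qubitCloneGram_le n
  simp only [cloneFid_eq_sum_norm_sq]
  rw [sum_comm, mul_sum]
  gcongr with i
  exact (sum_norm_sq_amplitude_le _ _ (K i)).trans
    (mul_le_mul_of_nonneg_right norm_gram_le (by positivity))

theorem expect_cloneFid_le {K : Fin m → Matrix (Fin (2 * n) → Bool) (Fin n → Bool) ℂ}
    (hK : ∑ i, (K i)ᴴ * K i ≤ 1) :
    𝔼 a : Fin n → Bool × Bool, cloneFid K (fun i => (a i).1) (fun i => (a i).2) ≤
      (3 / 4) ^ n := by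
  rw [Fintype.expect_eq_sum_div_card, div_le_iff₀ (by positivity)]
  calc ∑ a : Fin n → Bool × Bool, cloneFid K (fun i => (a i).1) (fun i => (a i).2)
      ≤ (3 / 2) ^ n * ∑ i, ∑ s, ∑ u, ‖K i s u‖ ^ 2 := sum_cloneFid_le K
    _ ≤ (3 / 2) ^ n * Fintype.card (Fin n → Bool) := by
        gcongr
        exact sum_sum_norm_sq_le_card_of_kraus_le_one hK
    _ = (3 / 4) ^ n * Fintype.card (Fin n → Bool × Bool) := by
        simp only [Fintype.card_fun, Fintype.card_prod, Fintype.card_bool, Fintype.card_fin]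
        push_cast
        rw [← mul_pow, ← mul_pow]
        norm_num

end Wiesner

/-- The order on matrices is the Loewner order: the cloners are quantum operations that need not
preserve the trace, and so may abort. -/
theorem derandomized_no_cloning_general {ι : Type*} [Countable ι] (mK : ι → ℕ → ℕ)
    (K : ∀ t n, Fin (mK t n) → Matrix (Fin (2 * n) → Bool) (Fin n → Bool) ℂ)
    (hK : ∀ t n, ∑ i, (K t n i)ᴴ * K t n i ≤ 1) :
    ∃ x θ : ∀ n : ℕ, Fin n → Bool, ∀ t, Negligible (fun n => cloneFid (K t n) (x n) (θ n)) := by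
  obtain ⟨a, ha⟩ := exists_forall_negligible_of_negligible_expect
    (f := fun t n (a : Fin n → Bool × Bool) =>
      cloneFid (K t n) (fun i => (a i).1) (fun i => (a i).2))
    (fun t n a => cloneFid_nonneg _ _ _)
    fun t => (negligible_pow (r := 3 / 4) (by norm_num [abs_of_pos])).of_eventually_le
      (.of_forall fun n => expect_cloneFid_le (hK t n))
  exact ⟨fun n i => (a n i).1, fun n i => (a n i).2, ha⟩

/-- For any countable family of cloning channels (each `Φ t n` a
quantum channel from `n` qubits to `2n` qubits, given by Kraus operators), there is
a single fixed sequence of Wiesner states `|x_n^{θ_n}⟩` which every member of the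
family fails to clone with more than negligible fidelity. -/
theorem derandomized_no_cloning (mK : ℕ → ℕ → ℕ)
    (K : ∀ t n : ℕ, Fin (mK t n) → Matrix (Fin (2 * n) → Bool) (Fin n → Bool) ℂ)
    (hK : ∀ t n, ∑ i, (K t n i)ᴴ * K t n i = 1) :
    ∃ x θ : ∀ n : ℕ, Fin n → Bool, ∀ t : ℕ,
      Negligible (fun n => cloneFid (K t n) (x n) (θ n)) := by
  exact derandomized_no_cloning_general mK K fun t n => (hK t n).le
end

section
/- Let n, a_B, a_C ∈ ℕ and let A, B, C be quantum channels, where A maps n qubits to a_B + a_C qubits, B maps n + a_B qubits to n qubits, and C maps a_C + n qubits to n qubits. Then 4^{−n} · Σ_{x∈{0,1}^n} Σ_{θ∈{0,1}^n} (⟨x| ⊗ ⟨x|) (B ⊗ C)(|θ⟩⟨θ| ⊗ A(|x^θ⟩⟨x^θ|) ⊗ |θ⟩⟨θ|) (|x⟩ ⊗ |x⟩) ≤ (1/2 + 1/(2√2))^n < 0.86^n, where B acts on the first copy of |θ⟩⟨θ| together with the first a_B qubits of A's output, and C acts on the remaining a_C qubits of A's output together with the second copy of |θ⟩⟨θ|.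 In words: for a uniformly random Wiesner state |x^θ⟩, the probability that a splitting channel A followed by two non-communicating parties B and C, each given θ, both output x is at most (1/2 + 1/(2√2))^n. -/
open scoped Matrix

/-- The winning probability, in the monogamy-of-entanglement game, of the
adversaries given by Kraus families `KA` (splitting channel, `n → aB + aC` qubits),
`KB` (`n + aB → n` qubits) and `KC` (`aC + n → n` qubits), on the Wiesner state
`|x^θ⟩`: the probability `⟨x,x| (B ⊗ C)(|θ⟩⟨θ| ⊗ A(|x^θ⟩⟨x^θ|) ⊗ |θ⟩⟨θ|) |x,x⟩`
that both `B` and `C`, each given `θ` alongside their share of `A`'s output,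
output `x`. -/
noncomputable def moeProb {n aB aC mA mB mC : ℕ}
    (KA : Fin mA → Matrix (Fin (aB + aC) → Bool) (Fin n → Bool) ℂ)
    (KB : Fin mB → Matrix (Fin n → Bool) (Fin (n + aB) → Bool) ℂ)
    (KC : Fin mC → Matrix (Fin n → Bool) (Fin (aC + n) → Bool) ℂ)
    (x θ : Fin n → Bool) : ℝ :=
  -- `σ = A(|x^θ⟩⟨x^θ|)`, the output of the splitting channel
  let σ : Matrix (Fin (aB + aC) → Bool) (Fin (aB + aC) → Bool) ℂ :=
    ∑ i, KA i * wiesnerDM x θ * (KA i)ᴴ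
  -- `ρmid = |θ⟩⟨θ| ⊗ σ ⊗ |θ⟩⟨θ|` on `n + aB + (aC + n)` qubits
  let ρmid : Matrix (Fin (n + aB + (aC + n)) → Bool) (Fin (n + aB + (aC + n)) → Bool) ℂ :=
    fun s s' =>
      (if (fun i : Fin n => s ⟨i.val, by have := i.isLt; omega⟩) = θ then 1 else 0) *
      (if (fun i : Fin n => s' ⟨i.val, by have := i.isLt; omega⟩) = θ then 1 else 0) *
      σ (fun i : Fin (aB + aC) => s ⟨n + i.val, by have := i.isLt; omega⟩)
        (fun i : Fin (aB + aC) => s' ⟨n + i.val, by have := i.isLt; omega⟩) *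
      (if (fun i : Fin n => s ⟨n + aB + aC + i.val, by have := i.isLt; omega⟩) = θ then 1 else 0) *
      (if (fun i : Fin n => s' ⟨n + aB + aC + i.val, by have := i.isLt; omega⟩) = θ then 1 else 0)
  -- the Kraus operators of `B ⊗ C`, from `n + aB + (aC + n)` qubits to `n + n` qubits
  let KBC : Fin mB × Fin mC →
      Matrix (Fin (n + n) → Bool) (Fin (n + aB + (aC + n)) → Bool) ℂ :=
    fun p r col =>
      KB p.1 (fun i => r ⟨i.val, by have := i.isLt; omega⟩)
        (fun j => col ⟨j.val, by have := j.isLt; omega⟩) *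
      KC p.2 (fun i => r ⟨n + i.val, by have := i.isLt; omega⟩)
        (fun j => col ⟨n + aB + j.val, by have := j.isLt; omega⟩)
  -- `τ = (B ⊗ C)(ρmid)`
  let τ : Matrix (Fin (n + n) → Bool) (Fin (n + n) → Bool) ℂ :=
    ∑ p : Fin mB × Fin mC, KBC p * ρmid * (KBC p)ᴴ
  -- the basis string `(x, x)` of length `n + n`
  let xx : Fin (n + n) → Bool := fun i =>
    if h : i.val < n then x ⟨i.val, h⟩ else x ⟨i.val - n, by have := i.isLt; omega⟩
  (τ xx xx).re

/-!
Stacking Kraus operators turns the channels into isometries, and the winning probability becomes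
`∑ ‖T_θ ψ_i‖ ^ 2`, where `ψ_i` is the Choi vector of the `i`-th Kraus operator of `A` and `T_θ` is
the Kronecker product of the Wiesner bras and the two Stinespring isometries, compressed to the
rows on which all three agree on `x`.

By duality and a Schur test, `∑_θ ‖T_θ ψ‖ ^ 2 ≤ D ‖ψ‖ ^ 2` as soon as every row sum
`∑_θ' ‖T_θ T_θ'ᴴ‖` is at most `D`. The crucial point is that the entry of `T_θ T_θ'ᴴ` is
`⟨x^θ, y^θ'⟩` times entries of two contractions; letting one party's contraction act before and
the other's after, the scalar `⟨x^θ, y^θ'⟩` is read off a diagonal matrix in between. Hence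
`‖T_θ T_θ'ᴴ‖` is at most the maximal overlap, which is `1 / √2` to the Hamming distance of `θ`
and `θ'`, and the row sums are `(1 + 1 / √2) ^ n`. Finally `∑_i ‖ψ_i‖ ^ 2 = 2 ^ n`.
-/

section SchurTest

variable {ι : Type*} [Fintype ι]

lemma sum_sum_mul_mul_le_of_sum_le {c : ι → ι → ℝ} (c_nonneg : ∀ i j, 0 ≤ c i j)
    (c_symm : ∀ i j, c i j = c j i) {D : ℝ} (c_sum_le : ∀ i, ∑ j, c i j ≤ D) (u : ι → ℝ) :
    ∑ i, ∑ j, c i j * (u i * u j) ≤ D * ∑ i, u i ^ 2 := by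
  have swap : ∑ i, ∑ j, c i j * u j ^ 2 = ∑ i, ∑ j, c i j * u i ^ 2 := by
    rw [Finset.sum_comm]
    simp only [c_symm]
  calc ∑ i, ∑ j, c i j * (u i * u j)
      ≤ ∑ i, ∑ j, c i j * ((u i ^ 2 + u j ^ 2) / 2) := by
        gcongr with i _ j _
        · exact c_nonneg i j
        · linarith [two_mul_le_add_sq (u i) (u j)]
    _ = ((∑ i, ∑ j, c i j * u i ^ 2) + ∑ i, ∑ j, c i j * u j ^ 2) / 2 := by
        simp only [← Finset.sum_add_distrib, Finset.sum_div, mul_add, add_div, mul_div_assoc]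
    _ = ∑ i, (∑ j, c i j) * u i ^ 2 := by
        rw [swap, add_self_div_two]
        simp only [Finset.sum_mul]
    _ ≤ D * ∑ i, u i ^ 2 := by
        rw [Finset.mul_sum]
        gcongr with i
        exact c_sum_le i

open scoped InnerProductSpace InnerProduct

variable {𝕜 E : Type*} [RCLike 𝕜] [NormedAddCommGroup E] [InnerProductSpace 𝕜 E] [CompleteSpace E]
  {F : ι → Type*} [∀ i, NormedAddCommGroup (F i)] [∀ i, InnerProductSpace 𝕜 (F i)]
  [∀ i, CompleteSpace (F i)] {T : ∀ i, E →L[𝕜] F i} {D : ℝ}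

lemma norm_sum_adjoint_apply_sq_le (overlap_sum_le : ∀ i, ∑ j, ‖T i ∘L (T j)†‖ ≤ D)
    (φ : ∀ i, F i) : ‖∑ i, ((T i)†) (φ i)‖ ^ 2 ≤ D * ∑ i, ‖φ i‖ ^ 2 := by
  have overlap_symm (i j) : ‖T i ∘L (T j)†‖ = ‖T j ∘L (T i)†‖ := by
    rw [← LinearIsometryEquiv.norm_map ContinuousLinearMap.adjoint (T i ∘L (T j)†),
      ContinuousLinearMap.adjoint_comp, ContinuousLinearMap.adjoint_adjoint]
  have inner_le (i j) : RCLike.re ⟪((T i)†) (φ i), ((T j)†) (φ j)⟫_𝕜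
      ≤ ‖T i ∘L (T j)†‖ * (‖φ i‖ * ‖φ j‖) := by
    rw [ContinuousLinearMap.adjoint_inner_left]
    calc RCLike.re ⟪φ i, (T i ∘L (T j)†) (φ j)⟫_𝕜
        ≤ ‖φ i‖ * ‖(T i ∘L (T j)†) (φ j)‖ := re_inner_le_norm _ _
      _ ≤ ‖φ i‖ * (‖T i ∘L (T j)†‖ * ‖φ j‖) := by
        gcongr
        exact ContinuousLinearMap.le_opNorm _ _
      _ = ‖T i ∘L (T j)†‖ * (‖φ i‖ * ‖φ j‖) := by ring
  calc ‖∑ i, ((T i)†) (φ i)‖ ^ 2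
      = ∑ i, ∑ j, RCLike.re ⟪((T i)†) (φ i), ((T j)†) (φ j)⟫_𝕜 := by
        rw [Finset.sum_comm]
        simp only [norm_sq_eq_re_inner (𝕜 := 𝕜), sum_inner, inner_sum, map_sum]
    _ ≤ ∑ i, ∑ j, ‖T i ∘L (T j)†‖ * (‖φ i‖ * ‖φ j‖) := by
        gcongr with i _ j _
        exact inner_le i j
    _ ≤ D * ∑ i, ‖φ i‖ ^ 2 :=
        sum_sum_mul_mul_le_of_sum_le (fun _ _ => norm_nonneg _) overlap_symm overlap_sum_le _

lemma sum_norm_apply_sq_le (hD : 0 ≤ D) (overlap_sum_le : ∀ i, ∑ j, ‖T i ∘L (T j)†‖ ≤ D)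
    (ψ : E) : ∑ i, ‖T i ψ‖ ^ 2 ≤ D * ‖ψ‖ ^ 2 := by
  set weight : ℝ := ∑ i, ‖T i ψ‖ ^ 2
  have weight_nonneg : 0 ≤ weight := by positivity
  have weight_le : weight ≤ ‖∑ i, ((T i)†) (T i ψ)‖ * ‖ψ‖ := by
    calc weight = RCLike.re ⟪∑ i, ((T i)†) (T i ψ), ψ⟫_𝕜 := by
          simp only [weight, norm_sq_eq_re_inner (𝕜 := 𝕜), sum_inner, map_sum,
            ContinuousLinearMap.adjoint_inner_left]
      _ ≤ ‖∑ i, ((T i)†) (T i ψ)‖ * ‖ψ‖ := re_inner_le_norm _ _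
  have weight_sq_le : weight * weight ≤ D * ‖ψ‖ ^ 2 * weight := by
    calc weight * weight ≤ (‖∑ i, ((T i)†) (T i ψ)‖ * ‖ψ‖) ^ 2 := by
          rw [← sq]
          gcongr
      _ = ‖∑ i, ((T i)†) (T i ψ)‖ ^ 2 * ‖ψ‖ ^ 2 := mul_pow _ _ _
      _ ≤ D * weight * ‖ψ‖ ^ 2 := by
          gcongr
          exact norm_sum_adjoint_apply_sq_le overlap_sum_le _
      _ = D * ‖ψ‖ ^ 2 * weight := by ring
  rcases weight_nonneg.eq_or_lt with weight_zero | weight_pos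
  · rw [← weight_zero]
    positivity
  · exact le_of_mul_le_mul_right weight_sq_le weight_pos

end SchurTest

section OperatorNorm

open scoped Matrix.Norms.L2Operator Kronecker

variable {𝕜 l m n p q : Type*} [RCLike 𝕜] [Fintype l] [Fintype m] [Fintype n] [Fintype p]
  [Fintype q]

lemma sum_norm_mulVec_sq_le [DecidableEq n] (A : Matrix m n 𝕜) (v : n → 𝕜) :
    ∑ i, ‖(A *ᵥ v) i‖ ^ 2 ≤ ‖A‖ ^ 2 * ∑ j, ‖v j‖ ^ 2 := by
  have norm_le : ‖WithLp.toLp 2 (A *ᵥ v)‖ ≤ ‖A‖ * ‖WithLp.toLp 2 v‖ :=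
    A.l2_opNorm_mulVec (WithLp.toLp 2 v)
  simpa only [mul_pow, EuclideanSpace.norm_sq_eq] using
    pow_le_pow_left₀ (norm_nonneg _) norm_le 2

lemma l2_opNorm_le_of_sum_norm_mulVec_sq_le [DecidableEq n] {A : Matrix m n 𝕜} {c : ℝ}
    (hc : 0 ≤ c) (h : ∀ v : n → 𝕜, ∑ i, ‖(A *ᵥ v) i‖ ^ 2 ≤ c ^ 2 * ∑ j, ‖v j‖ ^ 2) :
    ‖A‖ ≤ c := by
  rw [Matrix.l2_opNorm_def]
  refine ContinuousLinearMap.opNorm_le_bound _ hc fun v => ?_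
  refine le_of_sq_le_sq ?_ (by positivity)
  rw [mul_pow, EuclideanSpace.norm_sq_eq, EuclideanSpace.norm_sq_eq]
  exact h v.ofLp

lemma l2_opNorm_le_one_of_conjTranspose_mul_self_eq_one [DecidableEq n] {V : Matrix m n 𝕜}
    (hV : Vᴴ * V = 1) : ‖V‖ ≤ 1 := by
  have norm_one_le : ‖(1 : Matrix n n 𝕜)‖ ≤ 1 := by
    rw [← Matrix.diagonal_one, Matrix.l2_opNorm_diagonal]
    exact (pi_norm_le_iff_of_nonneg zero_le_one).2 fun _ => norm_one.le
  rw [← hV, Matrix.l2_opNorm_conjTranspose_mul_self] at norm_one_le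
  nlinarith [norm_nonneg V]

lemma l2_opNorm_mul_conjTranspose_le_one [DecidableEq l] [DecidableEq n] {A : Matrix m n 𝕜}
    {A' : Matrix l n 𝕜} (hA : ‖A‖ ≤ 1) (hA' : ‖A'‖ ≤ 1) : ‖A * A'ᴴ‖ ≤ 1 := by
  grw [Matrix.l2_opNorm_mul, Matrix.l2_opNorm_conjTranspose, hA, hA', one_mul]

lemma l2_opNorm_submatrix_id_right_le [DecidableEq n] (A : Matrix m n 𝕜) {f : l → m}
    (hf : f.Injective) : ‖A.submatrix f id‖ ≤ ‖A‖ := by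
  classical
  refine l2_opNorm_le_of_sum_norm_mulVec_sq_le (norm_nonneg A) fun v => ?_
  calc ∑ i, ‖(A.submatrix f id *ᵥ v) i‖ ^ 2
      = ∑ i ∈ Finset.univ.image f, ‖(A *ᵥ v) i‖ ^ 2 := by
        rw [Finset.sum_image hf.injOn]
        rfl
    _ ≤ ∑ i, ‖(A *ᵥ v) i‖ ^ 2 :=
        Finset.sum_le_univ_sum_of_nonneg fun _ => sq_nonneg _
    _ ≤ ‖A‖ ^ 2 * ∑ j, ‖v j‖ ^ 2 := sum_norm_mulVec_sq_le A v

lemma l2_opNorm_submatrix_le [DecidableEq n] [DecidableEq p] (A : Matrix m n 𝕜)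
    {f : l → m} {g : p → n} (hf : f.Injective) (hg : g.Injective) :
    ‖A.submatrix f g‖ ≤ ‖A‖ := by
  classical
  calc ‖A.submatrix f g‖ = ‖(A.submatrix id g).submatrix f id‖ := rfl
    _ ≤ ‖A.submatrix id g‖ := l2_opNorm_submatrix_id_right_le _ hf
    _ = ‖Aᴴ.submatrix g id‖ := by
        rw [← Matrix.l2_opNorm_conjTranspose, Matrix.conjTranspose_submatrix]
    _ ≤ ‖Aᴴ‖ := l2_opNorm_submatrix_id_right_le _ hg
    _ = ‖A‖ := Matrix.l2_opNorm_conjTranspose A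

lemma l2_opNorm_kronecker_one_le [DecidableEq n] [DecidableEq p] (A : Matrix m n 𝕜) :
    ‖A ⊗ₖ (1 : Matrix p p 𝕜)‖ ≤ ‖A‖ := by
  refine l2_opNorm_le_of_sum_norm_mulVec_sq_le (norm_nonneg A) fun v => ?_
  have slice_eq (i : m) (k : p) : ((A ⊗ₖ (1 : Matrix p p 𝕜)) *ᵥ v) (i, k)
      = (A *ᵥ fun j => v (j, k)) i := by
    simp [Matrix.mulVec, dotProduct, Fintype.sum_prod_type, Matrix.one_apply]
  simp only [Fintype.sum_prod_type_right, slice_eq]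
  rw [Finset.mul_sum]
  gcongr with k
  exact sum_norm_mulVec_sq_le A fun j => v (j, k)

lemma l2_opNorm_one_kronecker_le [DecidableEq n] [DecidableEq p] (A : Matrix m n 𝕜) :
    ‖(1 : Matrix p p 𝕜) ⊗ₖ A‖ ≤ ‖A‖ :=
  calc ‖(1 : Matrix p p 𝕜) ⊗ₖ A‖
      = ‖(A ⊗ₖ (1 : Matrix p p 𝕜)).submatrix Prod.swap Prod.swap‖ := by
        congr 1
        ext
        exact mul_comm _ _
    _ ≤ ‖A ⊗ₖ (1 : Matrix p p 𝕜)‖ :=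
        l2_opNorm_submatrix_le _ Prod.swap_injective Prod.swap_injective
    _ ≤ ‖A‖ := l2_opNorm_kronecker_one_le A

lemma sum_sum_norm_mulVec_sq_le {ι : Type*} [Fintype ι] [DecidableEq m]
    {T : ι → Matrix m n 𝕜} {D : ℝ} (hD : 0 ≤ D)
    (overlap_sum_le : ∀ i, ∑ j, ‖T i * (T j)ᴴ‖ ≤ D) (ψ : n → 𝕜) :
    ∑ i, ∑ r, ‖(T i *ᵥ ψ) r‖ ^ 2 ≤ D * ∑ k, ‖ψ k‖ ^ 2 := by
  classical
  let toCLM (i : ι) : EuclideanSpace 𝕜 n →L[𝕜] EuclideanSpace 𝕜 m :=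
    (Matrix.toEuclideanLin (T i)).toContinuousLinearMap
  have norm_overlap (i j : ι) :
      ‖toCLM i ∘L ContinuousLinearMap.adjoint (toCLM j)‖ = ‖T i * (T j)ᴴ‖ := by
    rw [Matrix.l2_opNorm_def, LinearEquiv.trans_apply, Matrix.toLpLin_mul_same,
      Matrix.toEuclideanLin_conjTranspose_eq_adjoint]
    rfl
  have bound := sum_norm_apply_sq_le (T := toCLM) hD (by simpa only [norm_overlap])
    (WithLp.toLp 2 ψ)
  simp only [EuclideanSpace.norm_sq_eq] at bound
  exact bound

end OperatorNorm

section JointGuess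

open scoped Matrix.Norms.L2Operator Kronecker

variable {𝕜 X Y S B C K L K' L' : Type*} [RCLike 𝕜]

/-- The embedding `(x, k, l) ↦ ((x, k), (x, l))` selecting, among the pairs of outcomes of two
parties, those in which both report the same `x`. -/
def copyFst (r : X × K × L) : (X × K) × (X × L) :=
  ((r.1, r.2.1), (r.1, r.2.2))

lemma copyFst_injective : (copyFst : X × K × L → (X × K) × (X × L)).Injective := by
  rintro ⟨x, k, l⟩ ⟨x', k', l'⟩ h
  simp_all [copyFst]

/-- The operator describing the event that a measurement with rows `a` and two parties acting by
`V` and `W` all report the same `x`; `k` and `l` are the parties' environment labels. -/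
def jointGuess (a : Matrix X S 𝕜) (V : Matrix (X × K) B 𝕜) (W : Matrix (X × L) C 𝕜) :
    Matrix (X × K × L) (S × B × C) 𝕜 :=
  (a ⊗ₖ (V ⊗ₖ W)).submatrix (fun r => (r.1, copyFst r)) id

lemma jointGuess_mulVec_apply [Fintype S] [Fintype B] [Fintype C] (a : Matrix X S 𝕜)
    (V : Matrix (X × K) B 𝕜) (W : Matrix (X × L) C 𝕜) (ψ : S × B × C → 𝕜) (x : X) (k : K)
    (l : L) : (jointGuess a V W *ᵥ ψ) (x, k, l)
      = ∑ s, ∑ b, ∑ c, a x s * (V (x, k) b * W (x, l) c) * ψ (s, b, c) := by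
  simp only [Matrix.mulVec, dotProduct, Fintype.sum_prod_type]
  rfl

lemma jointGuess_mul_conjTranspose [Fintype S] [Fintype B] [Fintype C]
    (a : Matrix X S 𝕜) (V : Matrix (X × K) B 𝕜) (W : Matrix (X × L) C 𝕜)
    (a' : Matrix Y S 𝕜) (V' : Matrix (Y × K') B 𝕜) (W' : Matrix (Y × L') C 𝕜) :
    jointGuess a V W * (jointGuess a' V' W')ᴴ
      = ((a * a'ᴴ) ⊗ₖ ((V * V'ᴴ) ⊗ₖ (W * W'ᴴ))).submatrix
          (fun r => (r.1, copyFst r)) (fun r => (r.1, copyFst r)) := by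
  rw [Matrix.mul_kronecker_mul, Matrix.mul_kronecker_mul, ← Matrix.conjTranspose_kronecker,
    ← Matrix.conjTranspose_kronecker]
  rfl

lemma one_kronecker_mul_diagonal_mul_kronecker_one_apply {P P' Q Q' : Type*} [Fintype P]
    [Fintype Q] [DecidableEq P] [DecidableEq Q] (M : Matrix P P' 𝕜) (N : Matrix Q' Q 𝕜)
    (d : P × Q → 𝕜) (p : P) (p' : P') (q : Q) (q' : Q') :
    (((1 : Matrix P P 𝕜) ⊗ₖ N) * Matrix.diagonal d * (M ⊗ₖ (1 : Matrix Q Q 𝕜))) (p, q') (p', q)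
      = d (p, q) * (M p p' * N q' q) := by
  rw [Matrix.mul_apply]
  simp only [Matrix.mul_diagonal, Matrix.kronecker_apply, Matrix.one_apply,
    Fintype.sum_prod_type, ite_mul, mul_ite, one_mul, mul_one, zero_mul, mul_zero,
    Finset.sum_ite_eq, Finset.sum_ite_eq', Finset.mem_univ, if_true]
  ring

variable [Fintype X] [Fintype Y] [Fintype K] [Fintype L] [Fintype K'] [Fintype L']
  [DecidableEq Y] [DecidableEq K'] [DecidableEq L']

lemma l2_opNorm_kronecker_submatrix_copyFst_le {G : Matrix X Y 𝕜} {c : ℝ} (hc : 0 ≤ c)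
    (hG : ∀ x y, ‖G x y‖ ≤ c) (M : Matrix (X × K) (Y × K') 𝕜) (N : Matrix (X × L) (Y × L') 𝕜) :
    ‖(G ⊗ₖ (M ⊗ₖ N)).submatrix (fun r => (r.1, copyFst r)) (fun r => (r.1, copyFst r))‖
      ≤ c * (‖M‖ * ‖N‖) := by
  classical
  let entries : (X × K) × (Y × L') → 𝕜 := fun r => G r.1.1 r.2.1
  let left := (1 : Matrix (X × K) (X × K) 𝕜) ⊗ₖ N
  let right := M ⊗ₖ (1 : Matrix (Y × L') (Y × L') 𝕜)
  have entries_norm_le : ‖Matrix.diagonal entries‖ ≤ c := by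
    rw [Matrix.l2_opNorm_diagonal]
    exact (pi_norm_le_iff_of_nonneg hc).2 fun r => hG r.1.1 r.2.1
  calc ‖(G ⊗ₖ (M ⊗ₖ N)).submatrix (fun r => (r.1, copyFst r)) (fun r => (r.1, copyFst r))‖
      = ‖(left * Matrix.diagonal entries * right).submatrix copyFst copyFst‖ := by
        congr 1
        ext ⟨x, k, l⟩ ⟨y, k', l'⟩
        exact (one_kronecker_mul_diagonal_mul_kronecker_one_apply M N entries (x, k) (y, k')
          (y, l') (x, l)).symm
    _ ≤ ‖left * Matrix.diagonal entries * right‖ :=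
        l2_opNorm_submatrix_le _ copyFst_injective copyFst_injective
    _ ≤ ‖left‖ * ‖Matrix.diagonal entries‖ * ‖right‖ := by
        grw [Matrix.l2_opNorm_mul, Matrix.l2_opNorm_mul]
    _ ≤ ‖N‖ * c * ‖M‖ := by
        gcongr
        · exact l2_opNorm_one_kronecker_le N
        · exact l2_opNorm_kronecker_one_le M
    _ = c * (‖M‖ * ‖N‖) := by ring

variable [Fintype S] [Fintype B] [Fintype C] [DecidableEq B] [DecidableEq C]

lemma l2_opNorm_jointGuess_mul_conjTranspose_le {a : Matrix X S 𝕜} {V : Matrix (X × K) B 𝕜}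
    {W : Matrix (X × L) C 𝕜} {a' : Matrix Y S 𝕜} {V' : Matrix (Y × K') B 𝕜}
    {W' : Matrix (Y × L') C 𝕜} {c : ℝ} (hc : 0 ≤ c) (ha : ∀ x y, ‖(a * a'ᴴ) x y‖ ≤ c)
    (hV : ‖V‖ ≤ 1) (hV' : ‖V'‖ ≤ 1) (hW : ‖W‖ ≤ 1) (hW' : ‖W'‖ ≤ 1) :
    ‖jointGuess a V W * (jointGuess a' V' W')ᴴ‖ ≤ c := by
  calc ‖jointGuess a V W * (jointGuess a' V' W')ᴴ‖
      ≤ c * (‖V * V'ᴴ‖ * ‖W * W'ᴴ‖) := by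
        rw [jointGuess_mul_conjTranspose]
        exact l2_opNorm_kronecker_submatrix_copyFst_le hc ha _ _
    _ ≤ c * (1 * 1) := by
        gcongr
        · exact l2_opNorm_mul_conjTranspose_le_one hV hV'
        · exact l2_opNorm_mul_conjTranspose_le_one hW hW'
    _ = c := by ring

lemma sum_sum_norm_jointGuess_mulVec_sq_le {Θ : Type*} [Fintype Θ]
    {a : Θ → Matrix X S 𝕜} {V : Θ → Matrix (X × K) B 𝕜} {W : Θ → Matrix (X × L) C 𝕜}
    (hV : ∀ θ, ‖V θ‖ ≤ 1) (hW : ∀ θ, ‖W θ‖ ≤ 1) {c : Θ → Θ → ℝ} (hc : ∀ θ θ', 0 ≤ c θ θ')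
    (ha : ∀ θ θ' x y, ‖(a θ * (a θ')ᴴ) x y‖ ≤ c θ θ') {D : ℝ} (hD : 0 ≤ D)
    (c_sum_le : ∀ θ, ∑ θ', c θ θ' ≤ D) (ψ : S × B × C → 𝕜) :
    ∑ θ, ∑ r, ‖(jointGuess (a θ) (V θ) (W θ) *ᵥ ψ) r‖ ^ 2 ≤ D * ∑ q, ‖ψ q‖ ^ 2 := by
  classical
  refine sum_sum_norm_mulVec_sq_le hD (fun θ => le_trans ?_ (c_sum_le θ)) ψ
  gcongr with θ'
  exact l2_opNorm_jointGuess_mul_conjTranspose_le (hc θ θ') (ha θ θ') (hV θ) (hV θ') (hW θ) (hW θ')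

end JointGuess

section KrausFamily

open scoped Matrix.Norms.L2Operator

variable {𝕜 ι P Q : Type*} [RCLike 𝕜]

/-- The Stinespring operator of a Kraus family: the operators stacked on top of each other, with
the Kraus label recorded as an environment register. -/
def krausStack (K : ι → Matrix P Q 𝕜) : Matrix (P × ι) Q 𝕜 :=
  Matrix.of fun p q => K p.2 p.1 q

variable [Fintype ι] [Fintype P] {K : ι → Matrix P Q 𝕜}

lemma conjTranspose_krausStack_mul_self (K : ι → Matrix P Q 𝕜) :
    (krausStack K)ᴴ * krausStack K = ∑ i, (K i)ᴴ * K i := by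
  ext q q'
  rw [Matrix.mul_apply, Matrix.sum_apply, Fintype.sum_prod_type_right]
  rfl

lemma l2_opNorm_krausStack_submatrix_le_one {B : Type*} [Fintype B] [Finite Q] [DecidableEq B]
    [DecidableEq Q] (hK : ∑ i, (K i)ᴴ * K i = 1) {f : B → Q} (hf : f.Injective) :
    ‖(krausStack K).submatrix id f‖ ≤ 1 := by
  have := Fintype.ofFinite Q
  calc ‖(krausStack K).submatrix id f‖ ≤ ‖krausStack K‖ :=
        l2_opNorm_submatrix_le _ Function.injective_id hf
    _ ≤ 1 := l2_opNorm_le_one_of_conjTranspose_mul_self_eq_one <|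
        (conjTranspose_krausStack_mul_self K).trans hK

variable [Fintype Q]

lemma mul_sum_vecMulVec_mul_conjTranspose_apply_self {R : Type*} (A : Matrix R Q 𝕜)
    (ζ : ι → Q → 𝕜) (r : R) :
    (A * (∑ i, Matrix.vecMulVec (ζ i) (star (ζ i))) * Aᴴ) r r
      = ((∑ i, ‖(A *ᵥ ζ i) r‖ ^ 2 : ℝ) : 𝕜) := by
  simp only [Matrix.mul_sum, Matrix.sum_mul, Matrix.sum_apply, Matrix.mul_vecMulVec,
    Matrix.vecMulVec_mul, ← Matrix.star_mulVec, Matrix.vecMulVec_apply, Pi.star_apply,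
    RCLike.star_def, RCLike.mul_conj]
  push_cast
  rfl

lemma sum_sum_sum_norm_sq_eq_card [DecidableEq Q] (hK : ∑ i, (K i)ᴴ * K i = 1) :
    ∑ i, ∑ q, ∑ p, ‖K i p q‖ ^ 2 = Fintype.card Q := by
  have trace_eq : ∑ i, ∑ q, ∑ p, (‖K i p q‖ ^ 2 : 𝕜) = Fintype.card Q := by
    rw [Finset.sum_comm]
    simpa only [Matrix.trace, Matrix.diag_apply, Matrix.sum_apply, Matrix.mul_apply,
      Matrix.conjTranspose_apply, RCLike.star_def, RCLike.conj_mul, Matrix.one_apply_eq,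
      Finset.sum_const, Finset.card_univ, nsmul_eq_mul, mul_one] using congrArg Matrix.trace hK
  exact_mod_cast trace_eq

end KrausFamily

section Wiesner

variable {n : ℕ}

/-- The change-of-basis matrix whose rows are the Wiesner states in the basis `θ`. -/
noncomputable def wiesnerMatrix (θ : Fin n → Bool) : Matrix (Fin n → Bool) (Fin n → Bool) ℂ :=
  Matrix.of fun x => wiesnerVec x θ

/-- The maximal overlap `2 ^ (-d / 2)`, with `d` the Hamming distance of `θ` and `θ'`, between a
Wiesner state in the basis `θ` and one in the basis `θ'`. -/
noncomputable def basisOverlap (θ θ' : Fin n → Bool) : ℝ :=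
  ∏ i, if θ i = θ' i then 1 else 1 / √2

lemma basisOverlap_nonneg (θ θ' : Fin n → Bool) : 0 ≤ basisOverlap θ θ' :=
  Finset.prod_nonneg fun _ _ => by split_ifs <;> positivity

lemma sum_basisOverlap (θ : Fin n → Bool) : ∑ θ', basisOverlap θ θ' = (1 + 1 / √2) ^ n := by
  have qubit_sum (t : Bool) : ∑ t', (if t = t' then (1 : ℝ) else 1 / √2) = 1 + 1 / √2 := by
    cases t <;> simp [add_comm]
  simp only [basisOverlap, ← Fintype.prod_sum fun i t' => if θ i = t' then (1 : ℝ) else 1 / √2,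
    qubit_sum, Finset.prod_const, Finset.card_univ, Fintype.card_fin]

lemma norm_sum_qAmp_mul_star_le (x θ y θ' : Bool) :
    ‖∑ t, qAmp x θ t * star (qAmp y θ' t)‖ ≤ if θ = θ' then 1 else 1 / √2 := by
  have inv_sqrt_two_mul_self : (√2 : ℂ)⁻¹ * (√2 : ℂ)⁻¹ = 1 / 2 := by
    rw [← mul_inv, ← Complex.ofReal_mul, Real.mul_self_sqrt zero_le_two]
    norm_num
  rw [Fintype.sum_bool]
  cases x <;> cases θ <;> cases y <;> cases θ' <;>
    simp [qAmp, inv_sqrt_two_mul_self, abs_of_pos] <;> norm_num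

lemma norm_wiesnerMatrix_mul_conjTranspose_apply_le (θ θ' x y : Fin n → Bool) :
    ‖(wiesnerMatrix θ * (wiesnerMatrix θ')ᴴ) x y‖ ≤ basisOverlap θ θ' := by
  have entry_eq : (wiesnerMatrix θ * (wiesnerMatrix θ')ᴴ) x y
      = ∏ i, ∑ t, qAmp (x i) (θ i) t * star (qAmp (y i) (θ' i) t) := by
    rw [Fintype.prod_sum, Matrix.mul_apply]
    simp only [wiesnerMatrix, Matrix.conjTranspose_apply, Matrix.of_apply, wiesnerVec, star_prod,
      Finset.prod_mul_distrib]
  rw [entry_eq, norm_prod]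
  exact Finset.prod_le_prod (fun _ _ => norm_nonneg _) fun _ _ => norm_sum_qAmp_mul_star_le _ _ _ _

lemma wiesnerDM_eq_vecMulVec (x θ : Fin n → Bool) :
    wiesnerDM x θ = Matrix.vecMulVec (wiesnerVec x θ) (star (wiesnerVec x θ)) :=
  rfl

end Wiesner

section Registers

open scoped Kronecker

variable {n aB aC : ℕ}

lemma sum_append {M α : Type*} [AddCommMonoid M] [Fintype α] {k l : ℕ}
    (f : (Fin (k + l) → α) → M) :
    ∑ w, f w = ∑ u : Fin k → α, ∑ v : Fin l → α, f (Fin.append u v) := by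
  rw [← (Fin.appendEquiv k l).sum_comp, Fintype.sum_prod_type]
  rfl

/-- The tensor product of operators on two registers, acting on the concatenated
register. -/
def registerKronecker {α R : Type*} [Mul R] {j k l m : ℕ}
    (A : Matrix (Fin j → α) (Fin k → α) R) (B : Matrix (Fin l → α) (Fin m → α) R) :
    Matrix (Fin (j + l) → α) (Fin (k + m) → α) R :=
  (A ⊗ₖ B).submatrix (Fin.appendEquiv j l).symm (Fin.appendEquiv k m).symm

lemma registerKronecker_mulVec_append {α R : Type*} [Fintype α] [NonUnitalNonAssocSemiring R]
    {j k l m : ℕ} (A : Matrix (Fin j → α) (Fin k → α) R) (B : Matrix (Fin l → α) (Fin m → α) R)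
    (ψ : (Fin (k + m) → α) → R) (x : Fin j → α) (y : Fin l → α) :
    (registerKronecker A B *ᵥ ψ) (Fin.append x y)
      = ∑ u, ∑ v, A x u * B y v * ψ (Fin.append u v) := by
  have append_symm {k l : ℕ} (u : Fin k → α) (v : Fin l → α) :
      (Fin.appendEquiv k l).symm (Fin.append u v) = (u, v) :=
    (Fin.appendEquiv k l).symm_apply_apply (u, v)
  simp only [Matrix.mulVec, dotProduct, sum_append, registerKronecker, Matrix.submatrix_apply,
    append_symm, Matrix.kronecker_apply]

/-- The vector `|θ⟩ ⊗ z ⊗ |θ⟩` handed to the two parties: the outer registers hold the two copies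
of the basis string, the middle one the output `z` of the splitting channel. -/
def sharedVec (θ : Fin n → Bool) (z : (Fin (aB + aC) → Bool) → ℂ) :
    (Fin (n + aB + (aC + n)) → Bool) → ℂ := fun s =>
  (if (fun i : Fin n => s ⟨i, by omega⟩) = θ then 1 else 0) *
    z (fun i : Fin (aB + aC) => s ⟨n + i, by omega⟩) *
    (if (fun i : Fin n => s ⟨n + aB + aC + i, by omega⟩) = θ then 1 else 0)

lemma sharedVec_append (θ : Fin n → Bool) (z : (Fin (aB + aC) → Bool) → ℂ)
    (t t' : Fin n → Bool) (b : Fin aB → Bool) (c : Fin aC → Bool) :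
    sharedVec θ z (Fin.append (Fin.append t b) (Fin.append c t'))
      = (if t = θ then 1 else 0) * z (Fin.append b c) * (if t' = θ then 1 else 0) := by
  let s : Fin (n + aB + (aC + n)) → Bool := Fin.append (Fin.append t b) (Fin.append c t')
  have fst_copy : (fun i : Fin n => s ⟨i, by omega⟩) = t := funext fun i =>
    (Fin.append_left _ _ (Fin.castAdd aB i)).trans (Fin.append_left _ _ i)
  have snd_copy : (fun i : Fin n => s ⟨n + aB + aC + i, by omega⟩) = t' := funext fun i => by
    have index_eq : (⟨n + aB + aC + i, by omega⟩ : Fin (n + aB + (aC + n)))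
        = Fin.natAdd (n + aB) (Fin.natAdd aC i) := Fin.ext (Nat.add_assoc _ _ _)
    rw [index_eq]
    exact (Fin.append_right _ _ _).trans (Fin.append_right _ _ _)
  have middle : (fun i : Fin (aB + aC) => s ⟨n + i, by omega⟩) = Fin.append b c := by
    funext i
    cases i using Fin.addCases with
    | left i =>
      exact (Fin.append_left _ _ (Fin.natAdd n i)).trans <|
        (Fin.append_right _ _ i).trans (Fin.append_left _ _ i).symm
    | right i =>
      have index_eq : (⟨n + Fin.natAdd aB i, by omega⟩ : Fin (n + aB + (aC + n)))
          = Fin.natAdd (n + aB) (Fin.castAdd n i) := Fin.ext (Nat.add_assoc _ _ _).symm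
      rw [index_eq, Fin.append_right]
      exact (Fin.append_right _ _ _).trans (Fin.append_left _ _ _)
  change (if (fun i : Fin n => s ⟨i, by omega⟩) = θ then 1 else 0) * z _ * _ = _
  rw [fst_copy, snd_copy, middle]

/-- The density matrix `|θ⟩⟨θ| ⊗ σ ⊗ |θ⟩⟨θ|` handed to the two parties, in the entrywise form in
which it occurs in `moeProb`. -/
def sharedDM (θ : Fin n → Bool) (σ : Matrix (Fin (aB + aC) → Bool) (Fin (aB + aC) → Bool) ℂ) :
    Matrix (Fin (n + aB + (aC + n)) → Bool) (Fin (n + aB + (aC + n)) → Bool) ℂ := fun s s' =>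
  (if (fun i : Fin n => s ⟨i, by omega⟩) = θ then 1 else 0) *
    (if (fun i : Fin n => s' ⟨i, by omega⟩) = θ then 1 else 0) *
    σ (fun i : Fin (aB + aC) => s ⟨n + i, by omega⟩)
      (fun i : Fin (aB + aC) => s' ⟨n + i, by omega⟩) *
    (if (fun i : Fin n => s ⟨n + aB + aC + i, by omega⟩) = θ then 1 else 0) *
    (if (fun i : Fin n => s' ⟨n + aB + aC + i, by omega⟩) = θ then 1 else 0)

lemma sharedDM_sum_vecMulVec {ι : Type*} [Fintype ι] (θ : Fin n → Bool)
    (z : ι → (Fin (aB + aC) → Bool) → ℂ) :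
    sharedDM θ (∑ i, Matrix.vecMulVec (z i) (star (z i)))
      = ∑ i, Matrix.vecMulVec (sharedVec θ (z i)) (star (sharedVec θ (z i))) := by
  ext s s'
  simp only [sharedDM, Matrix.sum_apply, Matrix.vecMulVec_apply, Pi.star_apply, sharedVec,
    star_mul', apply_ite star, star_one, star_zero, Finset.mul_sum, Finset.sum_mul]
  refine Finset.sum_congr rfl fun i _ => ?_
  ring

lemma registerKronecker_mulVec_sharedVec (A : Matrix (Fin n → Bool) (Fin (n + aB) → Bool) ℂ)
    (B : Matrix (Fin n → Bool) (Fin (aC + n) → Bool) ℂ) (x y θ : Fin n → Bool)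
    (z : (Fin (aB + aC) → Bool) → ℂ) :
    (registerKronecker A B *ᵥ sharedVec θ z) (Fin.append x y)
      = ∑ b, ∑ c, A x (Fin.append θ b) * B y (Fin.append c θ) * z (Fin.append b c) := by
  rw [registerKronecker_mulVec_append, sum_append, Finset.sum_eq_single θ]
  · simp [sum_append, sharedVec_append]
  · intro t _ t_ne
    simp [sum_append, sharedVec_append, t_ne]
  · simp

end Registers

section Game

open scoped Matrix.Norms.L2Operator

variable {n aB aC mA mB mC : ℕ}

/-- The Choi vector of a Kraus operator `A` of the splitting channel, with the output split into
the shares of the two parties. -/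
def splitVec (A : Matrix (Fin (aB + aC) → Bool) (Fin n → Bool) ℂ) :
    (Fin n → Bool) × (Fin aB → Bool) × (Fin aC → Bool) → ℂ :=
  fun q => A (Fin.append q.2.1 q.2.2) q.1

/-- The Stinespring operator of the first party, once told the basis string `θ`. -/
def fstGuess (KB : Fin mB → Matrix (Fin n → Bool) (Fin (n + aB) → Bool) ℂ) (θ : Fin n → Bool) :
    Matrix ((Fin n → Bool) × Fin mB) (Fin aB → Bool) ℂ :=
  (krausStack KB).submatrix id (Fin.append θ)

/-- The Stinespring operator of the second party, once told the basis string `θ`. -/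
def sndGuess (KC : Fin mC → Matrix (Fin n → Bool) (Fin (aC + n) → Bool) ℂ) (θ : Fin n → Bool) :
    Matrix ((Fin n → Bool) × Fin mC) (Fin aC → Bool) ℂ :=
  (krausStack KC).submatrix id (fun c => Fin.append c θ)

lemma l2_opNorm_fstGuess_le_one {KB : Fin mB → Matrix (Fin n → Bool) (Fin (n + aB) → Bool) ℂ}
    (hKB : ∑ i, (KB i)ᴴ * KB i = 1) (θ : Fin n → Bool) : ‖fstGuess KB θ‖ ≤ 1 :=
  l2_opNorm_krausStack_submatrix_le_one hKB fun _ _ h =>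
    congrArg Prod.snd ((Fin.appendEquiv n aB).injective (a₁ := (θ, _)) (a₂ := (θ, _)) h)

lemma l2_opNorm_sndGuess_le_one {KC : Fin mC → Matrix (Fin n → Bool) (Fin (aC + n) → Bool) ℂ}
    (hKC : ∑ i, (KC i)ᴴ * KC i = 1) (θ : Fin n → Bool) : ‖sndGuess KC θ‖ ≤ 1 :=
  l2_opNorm_krausStack_submatrix_le_one hKC fun _ _ h =>
    congrArg Prod.fst ((Fin.appendEquiv aC n).injective (a₁ := (_, θ)) (a₂ := (_, θ)) h)

lemma sum_sum_norm_splitVec_sq {KA : Fin mA → Matrix (Fin (aB + aC) → Bool) (Fin n → Bool) ℂ}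
    (hKA : ∑ i, (KA i)ᴴ * KA i = 1) : ∑ i, ∑ q, ‖splitVec (KA i) q‖ ^ 2 = 2 ^ n := by
  have card_eq := sum_sum_sum_norm_sq_eq_card hKA
  simp only [sum_append] at card_eq
  simpa [Fintype.sum_prod_type, splitVec] using card_eq

variable (KA : Fin mA → Matrix (Fin (aB + aC) → Bool) (Fin n → Bool) ℂ)
  (KB : Fin mB → Matrix (Fin n → Bool) (Fin (n + aB) → Bool) ℂ)
  (KC : Fin mC → Matrix (Fin n → Bool) (Fin (aC + n) → Bool) ℂ)

lemma sum_mul_wiesnerDM_mul_conjTranspose (x θ : Fin n → Bool) :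
    ∑ i, KA i * wiesnerDM x θ * (KA i)ᴴ
      = ∑ i, Matrix.vecMulVec (KA i *ᵥ wiesnerVec x θ) (star (KA i *ᵥ wiesnerVec x θ)) := by
  simp only [wiesnerDM_eq_vecMulVec, Matrix.mul_vecMulVec, Matrix.vecMulVec_mul,
    Matrix.star_mulVec]

lemma moeProb_eq_re_sum (x θ : Fin n → Bool) :
    moeProb KA KB KC x θ = (∑ p : Fin mB × Fin mC,
      (registerKronecker (KB p.1) (KC p.2) * sharedDM θ (∑ i, KA i * wiesnerDM x θ * (KA i)ᴴ) *
        (registerKronecker (KB p.1) (KC p.2))ᴴ) (Fin.append x x) (Fin.append x x)).re := by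
  have append_self_eq : Fin.append x x = fun i : Fin (n + n) =>
      if h : i.val < n then x ⟨i, h⟩ else x ⟨i - n, by omega⟩ := by
    funext i
    cases i using Fin.addCases with
    | left i => simp
    | right i =>
      simp only [Fin.append_right, Fin.val_natAdd, add_lt_iff_neg_left, not_lt_zero, dite_false,
        Nat.add_sub_cancel_left]
  rw [append_self_eq, ← Matrix.sum_apply]
  rfl

lemma moeProb_eq_sum_norm_registerKronecker_mulVec_sq (x θ : Fin n → Bool) :
    moeProb KA KB KC x θ = ∑ p : Fin mB × Fin mC, ∑ i,
      ‖(registerKronecker (KB p.1) (KC p.2) *ᵥ sharedVec θ (KA i *ᵥ wiesnerVec x θ))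
        (Fin.append x x)‖ ^ 2 := by
  rw [moeProb_eq_re_sum, sum_mul_wiesnerDM_mul_conjTranspose, sharedDM_sum_vecMulVec,
    Complex.re_sum]
  simp only [mul_sum_vecMulVec_mul_conjTranspose_apply_self, Complex.coe_algebraMap,
    Complex.ofReal_re]

lemma registerKronecker_mulVec_sharedVec_eq_jointGuess_mulVec
    (A : Matrix (Fin (aB + aC) → Bool) (Fin n → Bool) ℂ) (x θ : Fin n → Bool)
    (p : Fin mB × Fin mC) :
    (registerKronecker (KB p.1) (KC p.2) *ᵥ sharedVec θ (A *ᵥ wiesnerVec x θ)) (Fin.append x x)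
      = (jointGuess (wiesnerMatrix θ) (fstGuess KB θ) (sndGuess KC θ) *ᵥ splitVec A) (x, p) := by
  rw [registerKronecker_mulVec_sharedVec, jointGuess_mulVec_apply]
  simp only [Matrix.mulVec, dotProduct, Finset.mul_sum]
  rw [Finset.sum_comm_cycle]
  congr! 3 with s _ b _ c _
  simp only [wiesnerMatrix, fstGuess, sndGuess, splitVec, krausStack, Matrix.submatrix_apply,
    Matrix.of_apply, id]
  ring

lemma sum_sum_moeProb_eq :
    ∑ x, ∑ θ, moeProb KA KB KC x θ
      = ∑ i, ∑ θ, ∑ r, ‖(jointGuess (wiesnerMatrix θ) (fstGuess KB θ) (sndGuess KC θ) *ᵥ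
          splitVec (KA i)) r‖ ^ 2 := by
  simp only [moeProb_eq_sum_norm_registerKronecker_mulVec_sq,
    registerKronecker_mulVec_sharedVec_eq_jointGuess_mulVec]
  rw [Finset.sum_comm]
  refine Eq.trans ?_ Finset.sum_comm_cycle
  simp only [Fintype.sum_prod_type (α₁ := Fin n → Bool)]

variable {KA KB KC} in
lemma sum_sum_moeProb_le (hKA : ∑ i, (KA i)ᴴ * KA i = 1) (hKB : ∑ i, (KB i)ᴴ * KB i = 1)
    (hKC : ∑ i, (KC i)ᴴ * KC i = 1) :
    ∑ x, ∑ θ, moeProb KA KB KC x θ ≤ (1 + 1 / √2) ^ n * 2 ^ n := by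
  rw [sum_sum_moeProb_eq, ← sum_sum_norm_splitVec_sq hKA, Finset.mul_sum]
  gcongr with i
  exact sum_sum_norm_jointGuess_mulVec_sq_le (l2_opNorm_fstGuess_le_one hKB)
    (l2_opNorm_sndGuess_le_one hKC) basisOverlap_nonneg
    norm_wiesnerMatrix_mul_conjTranspose_apply_le (by positivity)
    (fun θ => (sum_basisOverlap θ).le) _

end Game

lemma half_add_inv_two_mul_sqrt_two_lt : 1 / 2 + 1 / (2 * √2) < 0.86 := by
  have lt_sqrt_two : 1.4 < √2 := Real.lt_sqrt_of_sq_lt (by norm_num)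
  have inv_lt : 1 / (2 * √2) < 1 / (2 * 1.4) := by gcongr
  norm_num at inv_lt ⊢
  linarith

/-- the monogamy-of-entanglement bound for Wiesner states: for any
channels `A`, `B`, `C` (given by Kraus families) the average, over uniformly random
`x, θ ∈ {0,1}^n`, of the probability that both `B` and `C` recover `x` is at most
`(1/2 + 1/(2√2))^n`; moreover `1/2 + 1/(2√2) < 0.86`. -/
theorem moe_game_bound (n aB aC mA mB mC : ℕ)
    (KA : Fin mA → Matrix (Fin (aB + aC) → Bool) (Fin n → Bool) ℂ)
    (KB : Fin mB → Matrix (Fin n → Bool) (Fin (n + aB) → Bool) ℂ)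
    (KC : Fin mC → Matrix (Fin n → Bool) (Fin (aC + n) → Bool) ℂ)
    (hKA : ∑ i, (KA i)ᴴ * KA i = 1)
    (hKB : ∑ i, (KB i)ᴴ * KB i = 1)
    (hKC : ∑ i, (KC i)ᴴ * KC i = 1) :
    ((4 : ℝ) ^ n)⁻¹ *
        ∑ x : Fin n → Bool, ∑ θ : Fin n → Bool, moeProb KA KB KC x θ
      ≤ (1 / 2 + 1 / (2 * Real.sqrt 2)) ^ n ∧
    (1 / 2 + 1 / (2 * Real.sqrt 2) : ℝ) < 0.86 := by
  refine ⟨?_, half_add_inv_two_mul_sqrt_two_lt⟩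
  calc ((4 : ℝ) ^ n)⁻¹ * ∑ x : Fin n → Bool, ∑ θ : Fin n → Bool, moeProb KA KB KC x θ
      ≤ ((4 : ℝ) ^ n)⁻¹ * ((1 + 1 / √2) ^ n * 2 ^ n) := by
        gcongr
        exact sum_sum_moeProb_le hKA hKB hKC
    _ = (4⁻¹ * ((1 + 1 / √2) * 2)) ^ n := by simp only [mul_pow, inv_pow]
    _ = (1 / 2 + 1 / (2 * √2)) ^ n := by
        congr 1
        field
end
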